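/- The singular locus Sing of the projective sextic curve F = 0 has exactly 2, 3, or 4 elements, and every point of Sing is a singularity of multiplicity exactly 2 (that is, at every point of Sing some second-order partial derivative of F does not vanish). -/

import Mathlib

open MvPolynomial

open scoped Polynomial LinearAlgebra.Projectivization

/-!
Let `A`, `B` be the homogenizations of `φ1`, `φ2` and let `z D = A - B`, so that `D` is a binary
cubic form, possibly with zero leading coefficient. Then `F = y⁴ z² - 2 (A + B) y² + D²`, and
`z² F = S² - 4 A B` with `S = y² z² - (A + B)`. Since `F_y = 4 y S`, at a singular point with
`y ≠ 0` both `F` and `S²` vanish to second order, hence so does the squarefree octic `A B`, which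
forces `x = z = 0`. On the line `y = 0` the singular points are the zeros of `D`. As `A` and `B`
have no common zero, `D` is nonzero and thus has one, two or three zeros; at each of them
`F_yy = -4 (A + B) = -8 B ≠ 0`, whereas `F_zz = 2` at `(0 : 1 : 0)`.
-/

section SingularIdeal

variable {σ τ R : Type*} [CommRing R]

/-- The ideal of polynomials vanishing at `v` together with all first partial derivatives. -/
def singularIdeal (v : σ → R) : Ideal (MvPolynomial σ R) where
  carrier := {p | eval v p = 0 ∧ ∀ i, eval v (pderiv i p) = 0}
  add_mem' hp hq := by
    simp only [Set.mem_ofPred_eq] at hp hq ⊢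
    simp [hp.1, hp.2, hq.1, hq.2]
  zero_mem' := by simp
  smul_mem' c p hp := by
    simp only [Set.mem_ofPred_eq] at hp ⊢
    simp [hp.1, hp.2]

theorem mem_singularIdeal {v : σ → R} {p : MvPolynomial σ R} :
    p ∈ singularIdeal v ↔ eval v p = 0 ∧ ∀ i, eval v (pderiv i p) = 0 :=
  Iff.rfl

theorem mul_mem_singularIdeal {v : σ → R} {p q : MvPolynomial σ R} (hp : eval v p = 0)
    (hq : eval v q = 0) : p * q ∈ singularIdeal v :=
  mem_singularIdeal.2 ⟨by simp [hp], fun i => by simp [hp, hq]⟩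

theorem sq_mem_singularIdeal {v : σ → R} {p : MvPolynomial σ R} (hp : eval v p = 0) :
    p ^ 2 ∈ singularIdeal v :=
  sq p ▸ mul_mem_singularIdeal hp hp

theorem eval_smul_of_isHomogeneous {p : MvPolynomial σ R} {n : ℕ} (hp : p.IsHomogeneous n)
    (c : R) (v : σ → R) : eval (c • v) p = c ^ n * eval v p := by
  rw [eval_eq, eval_eq, Finset.mul_sum]
  refine Finset.sum_congr rfl fun d hd => ?_
  have hdeg : ∑ i ∈ d.support, d i = n := (hp.degree_eq_sum_deg_support hd).symm
  simp only [Pi.smul_apply, smul_eq_mul, mul_pow, Finset.prod_mul_distrib,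
    Finset.prod_pow_eq_pow_sum, hdeg, mul_left_comm]

theorem eval_zero_of_isHomogeneous {p : MvPolynomial σ R} {n : ℕ} (hp : p.IsHomogeneous n)
    (hn : n ≠ 0) : eval 0 p = 0 := by
  simpa [hn] using eval_smul_of_isHomogeneous hp 0 0

theorem mem_singularIdeal_zero_of_isHomogeneous {p : MvPolynomial σ R} {n : ℕ}
    (hp : p.IsHomogeneous n) (hn : 2 ≤ n) : p ∈ singularIdeal 0 :=
  ⟨eval_zero_of_isHomogeneous hp (by lia),
    fun _ => eval_zero_of_isHomogeneous hp.pderiv (by lia)⟩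

theorem pderiv_rename_of_notMem_range {e : σ → τ} {j : τ} (hj : j ∉ Set.range e)
    (p : MvPolynomial σ R) : pderiv j (rename e p) = 0 := by
  classical
  refine pderiv_eq_zero_of_notMem_vars fun h => hj ?_
  obtain ⟨i, -, rfl⟩ := Finset.mem_image.1 (vars_rename e p h)
  exact ⟨i, rfl⟩

theorem rename_mem_singularIdeal {e : σ → τ} (he : e.Injective) {v : τ → R}
    {p : MvPolynomial σ R} : rename e p ∈ singularIdeal v ↔ p ∈ singularIdeal (v ∘ e) := by
  simp only [mem_singularIdeal, eval_rename]
  refine and_congr_right fun _ => ⟨fun h i => ?_, fun h j => ?_⟩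
  · simpa [pderiv_rename he, eval_rename] using h (e i)
  · by_cases hj : j ∈ Set.range e
    · obtain ⟨i, rfl⟩ := hj
      simpa [pderiv_rename he, eval_rename] using h i
    · simp [pderiv_rename_of_notMem_range hj]

theorem eq_of_aeval_snoc_one_eq {k : Type*} [Field k] [Infinite k] {m n : ℕ}
    {F G : MvPolynomial (Fin (m + 1)) k} (hF : F.IsHomogeneous n) (hG : G.IsHomogeneous n)
    (h : aeval (Fin.snoc X 1 : Fin (m + 1) → MvPolynomial (Fin m) k) F = aeval (Fin.snoc X 1) G) :
    F = G := by
  have eval_eq_of_last_eq_one (v : Fin (m + 1) → k) (hv : v (Fin.last m) = 1) :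
      eval v F = eval v G := by
    have eval_aeval (H : MvPolynomial (Fin (m + 1)) k) :
        eval (Fin.init v) (aeval (Fin.snoc X 1 : Fin (m + 1) → MvPolynomial (Fin m) k) H)
          = eval v H := by
      rw [aeval_def, eval_eval₂, ← eval₂_id]
      congr 1
      · ext; simp
      · ext i
        refine Fin.lastCases ?_ (fun j => ?_) i <;> simp [hv, Fin.init]
    rw [← eval_aeval, h, eval_aeval]
  suffices F * X (Fin.last m) = G * X (Fin.last m) from mul_right_cancel₀ (X_ne_zero _) this
  refine MvPolynomial.funext fun v => ?_
  rcases eq_or_ne (v (Fin.last m)) 0 with h0 | h0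
  · simp [h0]
  · have hv : v = v (Fin.last m) • (v (Fin.last m))⁻¹ • v := by simp [smul_smul, h0]
    rw [map_mul, map_mul, hv, eval_smul_of_isHomogeneous hF, eval_smul_of_isHomogeneous hG,
      eval_eq_of_last_eq_one _ (by simp [h0])]

end SingularIdeal

section BinaryForms

section CommSemiring

variable {R : Type*} [CommSemiring R]

theorem homogenize_succ {p : R[X]} {n : ℕ} (hp : p.natDegree ≤ n) :
    p.homogenize (n + 1) = X 1 * p.homogenize n := by
  simpa [add_comm 1 n] using Polynomial.homogenize_mul 1 p (m := 1) (by simp) hp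

theorem pderiv_zero_homogenize_succ (p : R[X]) (n : ℕ) :
    pderiv 0 (p.homogenize (n + 1)) = p.derivative.homogenize n := by
  ext m
  simp only [coeff_pderiv, Polynomial.coeff_homogenize, Polynomial.coeff_derivative]
  simp [add_right_comm _ 1]

theorem eval_homogenize_of_eq_zero (p : R[X]) (n : ℕ) {u : Fin 2 → R} (hu : u 1 = 0) :
    eval u (p.homogenize n) = p.coeff n * u 0 ^ n := by
  rw [Polynomial.homogenize, map_sum, Finset.sum_eq_single (n, 0)]
  · simp [eval_monomial, Finsupp.prod_fintype, Fin.prod_univ_two, hu]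
  · rintro ⟨a, b⟩ hab hne
    have hb : b ≠ 0 := by
      rintro rfl
      simp_all
    simp [eval_monomial, Finsupp.prod_fintype, Fin.prod_univ_two, hu, hb]
  · simp

theorem exists_homogenize_eq {G : MvPolynomial (Fin 2) R} {n : ℕ} (hG : G.IsHomogeneous n) :
    ∃ p : R[X], p.natDegree ≤ n ∧ p.homogenize n = G := by
  refine ⟨aeval ![Polynomial.X, 1] G, ?_, Polynomial.homogenize_eq_of_isHomogeneous hG rfl⟩
  simpa using aeval_natDegree_le G hG.totalDegree_le ![Polynomial.X, 1] (n := 1)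
    (by simp [Fin.forall_fin_two, Polynomial.natDegree_X_le])

end CommSemiring

variable {k : Type*} [Field k]

theorem eq_zero_of_homogenize_mem_singularIdeal {p : k[X]} (hp : p.Separable) {u : Fin 2 → k}
    (hdeg : p.natDegree ≠ 0) (hu : p.homogenize p.natDegree ∈ singularIdeal u) : u = 0 := by
  obtain ⟨n, hn⟩ := Nat.exists_eq_succ_of_ne_zero hdeg
  obtain ⟨h0, hder⟩ := mem_singularIdeal.1 hu
  by_cases hz : u 1 = 0
  · have hx : u 0 = 0 := by
      rw [eval_homogenize_of_eq_zero _ _ hz] at h0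
      simpa [hdeg, hp.ne_zero] using h0
    ext i
    fin_cases i <;> simp [hx, hz]
  · have hroot : p.eval (u 0 / u 1) = 0 := by
      rw [Polynomial.eval_homogenize le_rfl _ hz] at h0
      simpa [hz] using h0
    have hderiv : p.derivative.eval (u 0 / u 1) = 0 := by
      have := hder 0
      rw [hn, pderiv_zero_homogenize_succ, Polynomial.eval_homogenize _ _ hz] at this
      · simpa [hz] using this
      · exact p.natDegree_derivative_le.trans (by lia)
    exact absurd hderiv (hp.eval₂_derivative_ne_zero (RingHom.id k) hroot)

theorem exists_ne_zero_eval_eq_zero_of_isHomogeneous [IsAlgClosed k]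
    {G : MvPolynomial (Fin 2) k} {n : ℕ} (hG : G.IsHomogeneous n) (hn : n ≠ 0) :
    ∃ u : Fin 2 → k, u ≠ 0 ∧ eval u G = 0 := by
  obtain ⟨p, hp, rfl⟩ := exists_homogenize_eq hG
  by_cases hlead : p.coeff n = 0
  · exact ⟨![1, 0], by simp, by simp [eval_homogenize_of_eq_zero, hlead]⟩
  · have hdeg : p.degree ≠ 0 := fun h =>
      hlead (Polynomial.coeff_eq_zero_of_degree_lt (by rw [h]; exact_mod_cast hn.bot_lt))
    obtain ⟨a, ha⟩ := IsAlgClosed.exists_root p hdeg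
    exact ⟨![a, 1], by simp, by simpa [Polynomial.eval_homogenize hp] using ha⟩

theorem separable_list_prod_X_sub_C {l : List k} (hl : l.Nodup) :
    (l.map fun a => Polynomial.X - Polynomial.C a).prod.Separable := by
  rw [← Fin.prod_univ_fun_getElem]
  exact Polynomial.separable_prod_X_sub_C_iff.2 (List.nodup_iff_injective_get.1 hl)

end BinaryForms

section ProjectiveZeros

variable {σ τ k : Type*} [Field k]

/-- The projective hypersurface `G = 0`. The chosen representative is immaterial for homogeneous
`G`, see `mk_mem_projectiveZeros`. -/
def projectiveZeros (G : MvPolynomial σ k) : Set (ℙ k (σ → k)) :=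
  {P | eval P.rep G = 0}

theorem mk_mem_projectiveZeros {G : MvPolynomial σ k} {n : ℕ} (hG : G.IsHomogeneous n)
    {v : σ → k} (hv : v ≠ 0) : .mk k v hv ∈ projectiveZeros G ↔ eval v G = 0 := by
  obtain ⟨a, ha⟩ := Projectivization.exists_smul_eq_mk_rep k v hv
  rw [projectiveZeros, Set.mem_ofPred_eq, ← ha, Units.smul_def, eval_smul_of_isHomogeneous hG]
  simp

theorem encard_projectiveZeros_le {G : MvPolynomial (Fin 2) k} {n : ℕ} (hG : G.IsHomogeneous n)
    (hG0 : G ≠ 0) : (projectiveZeros G).encard ≤ n := by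
  classical
  obtain ⟨p, hp, rfl⟩ := exists_homogenize_eq hG
  have hp0 : p ≠ 0 := by
    rintro rfl
    simp at hG0
  let toLine := OnePoint.equivProjectivization k
  let roots : Set (OnePoint k) := (↑) '' (p.roots.toFinset : Set k)
  have infty_mem :
      toLine OnePoint.infty ∈ projectiveZeros (p.homogenize n) ↔ p.coeff n = 0 := by
    simp [toLine, mk_mem_projectiveZeros hG, eval_homogenize_of_eq_zero]
  have coe_mem (a : k) : toLine a ∈ projectiveZeros (p.homogenize n) ↔ ↑a ∈ roots := by
    simp [toLine, roots, mk_mem_projectiveZeros hG, Polynomial.eval_homogenize hp, hp0]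
  have encard_roots_le : roots.encard ≤ p.natDegree := by
    refine (Set.encard_image_le _ _).trans ?_
    rw [Set.encard_coe_eq_coe_finsetCard]
    exact_mod_cast p.roots.toFinset_card_le.trans p.card_roots'
  rw [← toLine.image_preimage (projectiveZeros _), toLine.injective.encard_image]
  by_cases hlead : p.coeff n = 0
  · have hlt : p.natDegree < n := hp.lt_of_ne fun h => hp0 (by simpa [← h] using hlead)
    calc
      _ ≤ (insert OnePoint.infty roots).encard := Set.encard_le_encard fun x hx => by
        cases x with
        | infty => exact Set.mem_insert _ _
        | coe a => exact Set.mem_insert_of_mem _ ((coe_mem a).1 hx)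
      _ ≤ roots.encard + 1 := Set.encard_insert_le _ _
      _ ≤ p.natDegree + 1 := by gcongr
      _ ≤ n := by exact_mod_cast hlt
  · refine le_trans (Set.encard_le_encard fun x hx => ?_)
      (encard_roots_le.trans (by exact_mod_cast hp))
    cases x with
    | infty => exact absurd (infty_mem.1 hx) hlead
    | coe a => exact (coe_mem a).1 hx

theorem extendByZero_linearMap_injective {e : σ → τ} (he : e.Injective) :
    Function.Injective (Function.ExtendByZero.linearMap k e) :=
  Function.extend_injective he (0 : τ → k)

theorem mk_mem_map_extendByZero_image {G : MvPolynomial σ k} {n : ℕ} (hG : G.IsHomogeneous n)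
    {e : σ → τ} (he : e.Injective) {v : τ → k} (hv : v ≠ 0) :
    .mk k v hv ∈ Projectivization.map (Function.ExtendByZero.linearMap k e)
        (extendByZero_linearMap_injective he) '' projectiveZeros G ↔
      (∀ j ∉ Set.range e, v j = 0) ∧ eval (v ∘ e) G = 0 := by
  constructor
  · rintro ⟨Q, hQ, hQv⟩
    induction Q using Projectivization.ind with | h w hw =>
    rw [mk_mem_projectiveZeros hG] at hQ
    obtain ⟨a, rfl⟩ := (Projectivization.mk_eq_mk_iff' _ _ _ _ _).1 hQv.symm
    refine ⟨fun j hj => ?_, ?_⟩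
    · simp [Function.extend_apply' _ _ _ hj]
    · have hcomp : (a • Function.ExtendByZero.linearMap k e w) ∘ e = a • w := by
        ext i
        simp [he.extend_apply]
      rw [hcomp, eval_smul_of_isHomogeneous hG, hQ, mul_zero]
  · rintro ⟨hv0, hGv⟩
    have hext : Function.extend e (v ∘ e) 0 = v := by
      ext j
      by_cases hj : j ∈ Set.range e
      · obtain ⟨i, rfl⟩ := hj
        simp [he.extend_apply]
      · rw [Function.extend_apply' _ _ _ hj, hv0 j hj, Pi.zero_apply]
    have hve : v ∘ e ≠ 0 := fun h => hv (by rw [← hext, h]; exact Function.extend_zero e)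
    refine ⟨.mk k (v ∘ e) hve, (mk_mem_projectiveZeros hG hve).2 hGv, ?_⟩
    rw [Projectivization.map_mk, Projectivization.mk_eq_mk_iff']
    exact ⟨1, by rw [one_smul]; exact hext.symm⟩

end ProjectiveZeros

section BiquadraticSextic

variable {R : Type*} [CommRing R]

/-- Regards a polynomial in the variables `x, z` as a polynomial in `x, y, z`. -/
noncomputable abbrev toTernary : MvPolynomial (Fin 2) R →ₐ[R] MvPolynomial (Fin 3) R :=
  rename (Fin.succAbove 1)

/-- The sextic form `y⁴z² - 2(A + B)y² + D²` in `x, y, z`, where `A`, `B`, `D` are forms in `x, z`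
of degrees 4, 4, 3. If `zD = A - B`, it is the projective closure of the curve swept out by
`y = ± √A ± √B` in the chart `z = 1`. -/
noncomputable def biquadraticSextic (A B D : MvPolynomial (Fin 2) R) : MvPolynomial (Fin 3) R :=
  X 1 ^ 4 * X 2 ^ 2 - 2 * toTernary (A + B) * X 1 ^ 2 + toTernary D ^ 2

variable {A B D : MvPolynomial (Fin 2) R}

theorem biquadraticSextic_isHomogeneous (hA : A.IsHomogeneous 4) (hB : B.IsHomogeneous 4)
    (hD : D.IsHomogeneous 3) : (biquadraticSextic A B D).IsHomogeneous 6 := by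
  have two_isHomogeneous : (2 : MvPolynomial (Fin 3) R).IsHomogeneous 0 := isHomogeneous_C _ 2
  exact ((((isHomogeneous_X R 1).pow 4).mul ((isHomogeneous_X R 2).pow 2)).sub
    ((two_isHomogeneous.mul (hA.add hB).rename_isHomogeneous).mul
      ((isHomogeneous_X R 1).pow 2))).add (hD.rename_isHomogeneous.pow 2)

theorem X_sq_mul_biquadraticSextic (hDAB : X 1 * D = A - B) :
    X 2 ^ 2 * biquadraticSextic A B D =
      (X 1 ^ 2 * X 2 ^ 2 - toTernary (A + B)) ^ 2 - 4 * toTernary (A * B) := by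
  have hι : X 2 * toTernary D = toTernary A - toTernary B := by
    simpa using congrArg toTernary hDAB
  simp only [biquadraticSextic, map_add, map_mul]
  linear_combination (X 2 * toTernary D + (toTernary A - toTernary B)) * hι

theorem pderiv_one_toTernary (p : MvPolynomial (Fin 2) R) : pderiv 1 (toTernary p) = 0 :=
  pderiv_rename_of_notMem_range (by simp) p

theorem pderiv_two_toTernary (p : MvPolynomial (Fin 2) R) :
    pderiv 2 (toTernary p) = toTernary (pderiv 1 p) := by
  have h := pderiv_rename (Fin.succAbove_right_injective (p := (1 : Fin 3))) 1 p
  rwa [show Fin.succAbove (1 : Fin 3) 1 = 2 from rfl] at h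

theorem pderiv_one_biquadraticSextic :
    pderiv 1 (biquadraticSextic A B D) =
      4 * X 1 * (X 1 ^ 2 * X 2 ^ 2 - toTernary (A + B)) := by
  have h2 : pderiv 1 (2 : MvPolynomial (Fin 3) R) = 0 := pderiv_C (a := 2)
  have hX2 : pderiv 1 (X 2 : MvPolynomial (Fin 3) R) = 0 := pderiv_X_of_ne (by decide)
  simp only [biquadraticSextic, map_add, map_sub, pderiv_mul, pderiv_pow, pderiv_X_self, h2, hX2,
    pderiv_one_toTernary]
  ring

theorem pderiv_one_one_biquadraticSextic :
    pderiv 1 (pderiv 1 (biquadraticSextic A B D)) =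
      4 * (3 * X 1 ^ 2 * X 2 ^ 2 - toTernary (A + B)) := by
  have h4 : pderiv 1 (4 : MvPolynomial (Fin 3) R) = 0 := pderiv_C (a := 4)
  have hX2 : pderiv 1 (X 2 : MvPolynomial (Fin 3) R) = 0 := pderiv_X_of_ne (by decide)
  simp only [pderiv_one_biquadraticSextic, map_sub, pderiv_mul, pderiv_pow, pderiv_X_self, h4, hX2,
    pderiv_one_toTernary]
  ring

theorem pderiv_two_two_biquadraticSextic :
    pderiv 2 (pderiv 2 (biquadraticSextic A B D)) =
      2 * (X 1 ^ 4 - X 1 ^ 2 * toTernary (pderiv 1 (pderiv 1 (A + B))) + toTernary (pderiv 1 D) ^ 2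
        + toTernary D * toTernary (pderiv 1 (pderiv 1 D))) := by
  have h2 : pderiv 2 (2 : MvPolynomial (Fin 3) R) = 0 := pderiv_C (a := 2)
  have hX1 : pderiv 2 (X 1 : MvPolynomial (Fin 3) R) = 0 := pderiv_X_of_ne (by decide)
  simp only [biquadraticSextic, map_add, map_sub, pderiv_mul, pderiv_pow, pderiv_X_self, h2, hX1,
    pderiv_two_toTernary, map_zero, Nat.cast_ofNat, Nat.add_one_sub_one, pow_one, pderiv_one]
  ring

theorem eval_toTernary (v : Fin 3 → R) (p : MvPolynomial (Fin 2) R) :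
    eval v (toTernary p) = eval (v ∘ Fin.succAbove 1) p :=
  eval_rename ..

section SingularLocus

variable {k : Type*} [Field k] {A B D : MvPolynomial (Fin 2) k} {v : Fin 3 → k}

theorem biquadraticSextic_mem_singularIdeal (hv1 : v 1 = 0)
    (hD : eval (v ∘ Fin.succAbove 1) D = 0) : biquadraticSextic A B D ∈ singularIdeal v := by
  have hX : (X 1 ^ 2 : MvPolynomial (Fin 3) k) ∈ singularIdeal v :=
    sq_mem_singularIdeal (by simpa using hv1)
  rw [biquadraticSextic,
    show (X 1 ^ 4 * X 2 ^ 2 : MvPolynomial (Fin 3) k) = X 1 ^ 2 * (X 1 ^ 2 * X 2 ^ 2) by ring]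
  exact add_mem (sub_mem (Ideal.mul_mem_right _ _ hX) (Ideal.mul_mem_left _ _ hX))
    (sq_mem_singularIdeal (by rwa [eval_toTernary]))

theorem four_ne_zero_of_two_ne_zero (h2 : (2 : k) ≠ 0) : (4 : k) ≠ 0 := by
  rw [show (4 : k) = 2 ^ 2 by norm_num]
  exact pow_ne_zero 2 h2

theorem mul_mem_singularIdeal_of_biquadraticSextic_mem (h2 : (2 : k) ≠ 0)
    (hDAB : X 1 * D = A - B) (hv1 : v 1 ≠ 0) (hF : biquadraticSextic A B D ∈ singularIdeal v) :
    A * B ∈ singularIdeal (v ∘ Fin.succAbove 1) := by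
  have h4 := four_ne_zero_of_two_ne_zero h2
  set S : MvPolynomial (Fin 3) k := X 1 ^ 2 * X 2 ^ 2 - toTernary (A + B) with hS
  have eval_S : eval v S = 0 := by
    have hFy := hF.2 1
    rw [pderiv_one_biquadraticSextic, ← hS] at hFy
    simpa [hv1, h4] using hFy
  have hmem : 4 * toTernary (A * B) ∈ singularIdeal v := by
    have hF_eq := X_sq_mul_biquadraticSextic hDAB
    rw [show 4 * toTernary (A * B) = S ^ 2 - X 2 ^ 2 * biquadraticSextic A B D by
      rw [hF_eq]; ring]
    exact sub_mem (sq_mem_singularIdeal eval_S) (Ideal.mul_mem_left _ _ hF)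
  have hunit : IsUnit (4 : MvPolynomial (Fin 3) k) := (isUnit_iff_ne_zero.2 h4).map C
  exact (rename_mem_singularIdeal Fin.succAbove_right_injective).1
    ((Ideal.unit_mul_mem_iff_mem _ hunit).1 hmem)

/-- The forms `A`, `B`, `D` in `x, z` that define a `biquadraticSextic` whose discriminant octic
`AB` has no multiple zero on the projective line. -/
structure IsBiquadraticTriple (A B D : MvPolynomial (Fin 2) k) : Prop where
  left : A.IsHomogeneous 4
  right : B.IsHomogeneous 4
  cubic : D.IsHomogeneous 3
  X_one_mul_cubic : X 1 * D = A - B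
  eq_zero_of_mul_mem_singularIdeal : ∀ u, A * B ∈ singularIdeal u → u = 0

namespace IsBiquadraticTriple

theorem mem_singularIdeal_of_comp_eq_zero (h : IsBiquadraticTriple A B D)
    (hu : v ∘ Fin.succAbove 1 = 0) : biquadraticSextic A B D ∈ singularIdeal v := by
  have hv2 : eval v (X 1 ^ 2 * X 2) = 0 := by
    have : v 2 = 0 := congrFun hu 1
    simp [this]
  have hD0 : eval v (toTernary D) = 0 := by
    rw [eval_toTernary, hu, eval_zero_of_isHomogeneous h.cubic three_ne_zero]
  have hAB : toTernary (A + B) ∈ singularIdeal v := by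
    rw [rename_mem_singularIdeal Fin.succAbove_right_injective, hu]
    exact mem_singularIdeal_zero_of_isHomogeneous (h.left.add h.right) (by lia)
  rw [biquadraticSextic, show (X 1 ^ 4 * X 2 ^ 2 : MvPolynomial (Fin 3) k) = (X 1 ^ 2 * X 2) ^ 2 by
    ring]
  exact add_mem (sub_mem (sq_mem_singularIdeal hv2)
    (Ideal.mul_mem_right _ _ (Ideal.mul_mem_left _ _ hAB))) (sq_mem_singularIdeal hD0)

theorem mem_singularIdeal_iff (h : IsBiquadraticTriple A B D) (h2 : (2 : k) ≠ 0) :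
    biquadraticSextic A B D ∈ singularIdeal v ↔
      v ∘ Fin.succAbove 1 = 0 ∨ v 1 = 0 ∧ eval (v ∘ Fin.succAbove 1) D = 0 := by
  constructor
  · intro hF
    by_cases hv1 : v 1 = 0
    · refine .inr ⟨hv1, ?_⟩
      simpa [biquadraticSextic, hv1, eval_toTernary] using hF.1
    · exact .inl (h.eq_zero_of_mul_mem_singularIdeal _
        (mul_mem_singularIdeal_of_biquadraticSextic_mem h2 h.X_one_mul_cubic hv1 hF))
  · rintro (hu | ⟨hv1, hD0⟩)
    · exact h.mem_singularIdeal_of_comp_eq_zero hu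
    · exact biquadraticSextic_mem_singularIdeal hv1 hD0

theorem eval_ne_zero_of_eval_cubic_eq_zero (h : IsBiquadraticTriple A B D) {u : Fin 2 → k}
    (hu : u ≠ 0) (hD : eval u D = 0) : eval u A = eval u B ∧ eval u B ≠ 0 := by
  have hAB : eval u A = eval u B := by
    rw [← sub_eq_zero, ← map_sub, ← h.X_one_mul_cubic, map_mul, hD, mul_zero]
  exact ⟨hAB, fun hB => hu (h.eq_zero_of_mul_mem_singularIdeal u
    (mul_mem_singularIdeal (hAB.trans hB) hB))⟩

theorem exists_eval_pderiv_pderiv_ne_zero (h : IsBiquadraticTriple A B D) (h2 : (2 : k) ≠ 0)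
    (hv : v ≠ 0) (hF : biquadraticSextic A B D ∈ singularIdeal v) :
    ∃ i j, eval v (pderiv i (pderiv j (biquadraticSextic A B D))) ≠ 0 := by
  by_cases hu : v ∘ Fin.succAbove 1 = 0
  · have hv1 : v 1 ≠ 0 := fun hv1 =>
      hv (funext ((Fin.forall_iff_succAbove 1).2 ⟨hv1, congrFun hu⟩))
    have hAB2 : eval 0 (pderiv 1 (pderiv 1 (A + B))) = 0 :=
      eval_zero_of_isHomogeneous (h.left.add h.right).pderiv.pderiv two_ne_zero
    have hD0 : eval 0 D = 0 := eval_zero_of_isHomogeneous h.cubic three_ne_zero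
    have hD1 : eval 0 (pderiv 1 D) = 0 := eval_zero_of_isHomogeneous h.cubic.pderiv two_ne_zero
    have hF22 : eval v (pderiv 2 (pderiv 2 (biquadraticSextic A B D))) = 2 * v 1 ^ 4 := by
      simp only [pderiv_two_two_biquadraticSextic, map_mul, map_add _ (_ - _), map_add _ (_ + _),
        map_sub, map_pow, map_ofNat, eval_X, eval_toTernary, hu, hAB2, hD0, hD1]
      ring
    exact ⟨2, 2, hF22 ▸ mul_ne_zero h2 (pow_ne_zero 4 hv1)⟩
  · obtain ⟨hv1, hD0⟩ := ((h.mem_singularIdeal_iff h2).1 hF).resolve_left hu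
    obtain ⟨hAB, hB⟩ := h.eval_ne_zero_of_eval_cubic_eq_zero hu hD0
    have hF11 : eval v (pderiv 1 (pderiv 1 (biquadraticSextic A B D))) =
        -(4 * (2 * eval (v ∘ Fin.succAbove 1) B)) := by
      simp only [pderiv_one_one_biquadraticSextic, map_mul, map_sub, map_add, map_pow, map_ofNat,
        eval_X, eval_toTernary, hv1, hAB]
      ring
    exact ⟨1, 1, hF11 ▸ neg_ne_zero.2
      (mul_ne_zero (four_ne_zero_of_two_ne_zero h2) (mul_ne_zero h2 hB))⟩

theorem cubic_ne_zero [IsAlgClosed k] (h : IsBiquadraticTriple A B D) : D ≠ 0 := by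
  intro hD
  obtain ⟨u, hu, hBu⟩ := exists_ne_zero_eval_eq_zero_of_isHomogeneous h.right four_ne_zero
  exact (h.eval_ne_zero_of_eval_cubic_eq_zero hu (by simp [hD])).2 hBu

end IsBiquadraticTriple

end SingularLocus

end BiquadraticSextic

section SingularPoints

variable {σ k : Type*} [Field k]

/-- The singular points of the projective hypersurface `F = 0`. The chosen representatives are
immaterial for homogeneous `F`. -/
def singularPoints (F : MvPolynomial σ k) : Set (ℙ k (σ → k)) :=
  {P | F ∈ singularIdeal P.rep}

theorem projectiveZeros_nonempty [IsAlgClosed k] {G : MvPolynomial (Fin 2) k} {n : ℕ}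
    (hG : G.IsHomogeneous n) (hn : n ≠ 0) : (projectiveZeros G).Nonempty :=
  have ⟨u, hu, hGu⟩ := exists_ne_zero_eval_eq_zero_of_isHomogeneous hG hn
  ⟨.mk k u hu, (mk_mem_projectiveZeros hG hu).2 hGu⟩

namespace IsBiquadraticTriple

variable {A B D : MvPolynomial (Fin 2) k}

theorem singularPoints_eq (h : IsBiquadraticTriple A B D) (h2 : (2 : k) ≠ 0) :
    singularPoints (biquadraticSextic A B D) =
      insert (.mk k (Pi.single 1 1) (by simp))
        (Projectivization.map (Function.ExtendByZero.linearMap k (Fin.succAbove 1))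
          (extendByZero_linearMap_injective Fin.succAbove_right_injective) ''
            projectiveZeros D) := by
  ext P
  have hmk : P = .mk k (Pi.single 1 1) (by simp) ↔ P.rep ∘ Fin.succAbove 1 = 0 := by
    conv_lhs => rw [← P.mk_rep, Projectivization.mk_eq_mk_iff']
    constructor
    · rintro ⟨a, ha⟩
      rw [← ha]
      ext i
      simp [Fin.succAbove_ne]
    · intro hu
      exact ⟨P.rep 1, funext ((Fin.forall_iff_succAbove 1).2
        ⟨by simp, fun i => by simpa [Fin.succAbove_ne] using (congrFun hu i).symm⟩)⟩
  have hmap := mk_mem_map_extendByZero_image h.cubic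
    (Fin.succAbove_right_injective (p := (1 : Fin 3))) P.rep_nonzero
  rw [P.mk_rep] at hmap
  rw [singularPoints, Set.mem_ofPred_eq, h.mem_singularIdeal_iff h2, Set.mem_insert_iff, hmk, hmap]
  simp

theorem encard_singularPoints (h : IsBiquadraticTriple A B D) (h2 : (2 : k) ≠ 0) :
    (singularPoints (biquadraticSextic A B D)).encard = (projectiveZeros D).encard + 1 := by
  rw [h.singularPoints_eq h2, Set.encard_insert_of_notMem,
    (Projectivization.map_injective _ _).encard_image]
  rw [mk_mem_map_extendByZero_image h.cubic Fin.succAbove_right_injective]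
  exact fun hP => one_ne_zero (α := k) (by simpa using hP.1 1 (by simp))

theorem ncard_singularPoints [IsAlgClosed k] (h : IsBiquadraticTriple A B D) (h2 : (2 : k) ≠ 0) :
    (singularPoints (biquadraticSextic A B D)).ncard ∈ Set.Icc 2 4 := by
  have hle := encard_projectiveZeros_le h.cubic h.cubic_ne_zero
  have hge := Set.one_le_encard_iff_nonempty.2 (projectiveZeros_nonempty h.cubic three_ne_zero)
  have hfin := Set.finite_of_encard_le_coe hle
  have hncard :
      (singularPoints (biquadraticSextic A B D)).ncard = (projectiveZeros D).ncard + 1 := by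
    rw [Set.ncard_def, h.encard_singularPoints h2, ← hfin.cast_ncard_eq]
    rfl
  rw [← hfin.cast_ncard_eq] at hle hge
  norm_cast at hle hge
  rw [Set.mem_Icc]
  lia

end IsBiquadraticTriple

end SingularPoints

section Homogenization

variable {k : Type*} [Field k] {p q : k[X]}

theorem isBiquadraticTriple_homogenize (hp : p.IsMonicOfDegree 4) (hq : q.IsMonicOfDegree 4)
    (hpq : (p * q).Separable) :
    IsBiquadraticTriple (p.homogenize 4) (q.homogenize 4) ((p - q).homogenize 3) where
  left := p.isHomogeneous_homogenize
  right := q.isHomogeneous_homogenize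
  cubic := (p - q).isHomogeneous_homogenize
  X_one_mul_cubic := by
    have hsub : (p - q).natDegree < 4 := hp.natDegree_sub_lt four_ne_zero hq
    rw [← homogenize_succ (Nat.le_of_lt_succ hsub), Polynomial.homogenize_sub]
  eq_zero_of_mul_mem_singularIdeal u hu := by
    have hdeg : (p * q).natDegree = 4 + 4 := (hp.mul hq).natDegree_eq
    refine eq_zero_of_homogenize_mem_singularIdeal hpq (by lia) ?_
    rwa [hdeg, Polynomial.homogenize_mul _ _ hp.natDegree_eq.le hq.natDegree_eq.le]

theorem aeval_biquadraticSextic_homogenize (hp : p.natDegree ≤ 4) (hq : q.natDegree ≤ 4)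
    (hpq : (p - q).natDegree ≤ 3) :
    aeval ![(X 0 : MvPolynomial (Fin 2) k), X 1, 1]
        (biquadraticSextic (p.homogenize 4) (q.homogenize 4) ((p - q).homogenize 3)) =
      X 1 ^ 4 - C 2 * (Polynomial.aeval (X 0) p + Polynomial.aeval (X 0) q) * X 1 ^ 2
        + (Polynomial.aeval (X 0) p - Polynomial.aeval (X 0) q) ^ 2 := by
  have haeval {r : k[X]} {n : ℕ} (hr : r.natDegree ≤ n) :
      aeval ![(X 0 : MvPolynomial (Fin 2) k), X 1, 1] (toTernary (r.homogenize n)) =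
        Polynomial.aeval (X 0) r := by
    rw [aeval_rename, Polynomial.aeval_homogenize_of_eq_one hr _ rfl]
    rfl
  rw [biquadraticSextic, map_add, map_add, map_sub, map_pow, map_mul, map_mul, map_mul, map_add,
    haeval hp, haeval hq, haeval hpq, map_sub, map_ofNat, map_ofNat]
  simp

theorem eq_biquadraticSextic_homogenize [Infinite k] (hp : p.IsMonicOfDegree 4)
    (hq : q.IsMonicOfDegree 4) {F : MvPolynomial (Fin 3) k} (hF : F.IsHomogeneous 6)
    (hFf : aeval ![(X 0 : MvPolynomial (Fin 2) k), X 1, 1] F =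
      X 1 ^ 4 - C 2 * (Polynomial.aeval (X 0) p + Polynomial.aeval (X 0) q) * X 1 ^ 2
        + (Polynomial.aeval (X 0) p - Polynomial.aeval (X 0) q) ^ 2) :
    F = biquadraticSextic (p.homogenize 4) (q.homogenize 4) ((p - q).homogenize 3) := by
  refine eq_of_aeval_snoc_one_eq hF (biquadraticSextic_isHomogeneous p.isHomogeneous_homogenize
    q.isHomogeneous_homogenize (p - q).isHomogeneous_homogenize) ?_
  have hsnoc : (Fin.snoc X 1 : Fin 3 → MvPolynomial (Fin 2) k) = ![X 0, X 1, 1] := by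
    ext i : 1
    fin_cases i <;> rfl
  rw [hsnoc, hFf, aeval_biquadraticSextic_homogenize hp.natDegree_eq.le hq.natDegree_eq.le
    (Nat.le_of_lt_succ (hp.natDegree_sub_lt four_ne_zero hq))]

end Homogenization

theorem stmt_19_general
    {k : Type*} [Field k] [IsAlgClosed k] (h2 : (2 : k) ≠ 0)
    (α1 α2 α3 α4 β1 β2 β3 β4 : k)
    (hdist : ([α1, α2, α3, α4, β1, β2, β3, β4] : List k).Pairwise (· ≠ ·))
    (φ1 φ2 f : MvPolynomial (Fin 2) k)
    (hφ1 : φ1 = (X 0 - C α1) * (X 0 - C α2) * (X 0 - C α3) * (X 0 - C α4))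
    (hφ2 : φ2 = (X 0 - C β1) * (X 0 - C β2) * (X 0 - C β3) * (X 0 - C β4))
    (hf : f = X 1 ^ 4 - C 2 * (φ1 + φ2) * X 1 ^ 2 + (φ1 - φ2) ^ 2)
    (F : MvPolynomial (Fin 3) k)
    (hFhom : F.IsHomogeneous 6)
    (hFf : aeval ![(X 0 : MvPolynomial (Fin 2) k), X 1, 1] F = f)
    (Sing : Set (Projectivization k (Fin 3 → k)))
    (hSing : ∀ P : Projectivization k (Fin 3 → k),
      P ∈ Sing ↔ (eval P.rep F = 0 ∧
        eval P.rep (pderiv 0 F) = 0 ∧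
        eval P.rep (pderiv 1 F) = 0 ∧
        eval P.rep (pderiv 2 F) = 0)) :
    (Sing.ncard = 2 ∨ Sing.ncard = 3 ∨ Sing.ncard = 4)
    ∧ ∀ P ∈ Sing, ∃ i j : Fin 3, eval P.rep (pderiv i (pderiv j F)) ≠ 0 := by
  obtain rfl : Sing = singularPoints F := Set.ext fun P => (hSing P).trans <| by
    simp [singularPoints, mem_singularIdeal, Fin.forall_fin_succ]
  let quartic (a b c d : k) : k[X] :=
    (.X - .C a) * (.X - .C b) * (.X - .C c) * (.X - .C d)
  have isMonicOfDegree_quartic (a b c d : k) : (quartic a b c d).IsMonicOfDegree 4 :=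
    (((Polynomial.isMonicOfDegree_X_sub_one a).mul (Polynomial.isMonicOfDegree_X_sub_one b)).mul
      (Polynomial.isMonicOfDegree_X_sub_one c)).mul (Polynomial.isMonicOfDegree_X_sub_one d)
  have hp := isMonicOfDegree_quartic α1 α2 α3 α4
  have hq := isMonicOfDegree_quartic β1 β2 β3 β4
  have hpq : (quartic α1 α2 α3 α4 * quartic β1 β2 β3 β4).Separable := by
    simpa [quartic, mul_assoc] using separable_list_prod_X_sub_C hdist
  obtain rfl := eq_biquadraticSextic_homogenize hp hq hFhom <| by
    simpa [quartic, algebraMap_eq, ← hφ1, ← hφ2, ← hf] using hFf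
  have hABD := isBiquadraticTriple_homogenize hp hq hpq
  obtain ⟨htwo_le, hle_four⟩ := hABD.ncard_singularPoints h2
  exact ⟨by lia, fun P hP => hABD.exists_eval_pderiv_pderiv_ne_zero h2 P.rep_nonzero hP⟩

/-- The singular locus of the projective sextic F = 0 has exactly 2, 3 or 4
elements, and every singular point has multiplicity exactly 2 (some
second-order partial derivative of F does not vanish there). -/
theorem stmt_19
    {k : Type*} [Field k] [IsAlgClosed k]
    (p : ℕ) [CharP k p] (hp : p = 0 ∨ 5 ≤ p)
    (α1 α2 α3 α4 β1 β2 β3 β4 : k)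
    (hdist : ([α1, α2, α3, α4, β1, β2, β3, β4] : List k).Pairwise (· ≠ ·))
    (φ1 φ2 f : MvPolynomial (Fin 2) k)
    (hφ1 : φ1 = (X 0 - C α1) * (X 0 - C α2) * (X 0 - C α3) * (X 0 - C α4))
    (hφ2 : φ2 = (X 0 - C β1) * (X 0 - C β2) * (X 0 - C β3) * (X 0 - C β4))
    (hf : f = X 1 ^ 4 - C 2 * (φ1 + φ2) * X 1 ^ 2 + (φ1 - φ2) ^ 2)
    (F : MvPolynomial (Fin 3) k)
    (hFhom : F.IsHomogeneous 6)
    (hFf : aeval ![(X 0 : MvPolynomial (Fin 2) k), X 1, 1] F = f)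
    (Sing : Set (Projectivization k (Fin 3 → k)))
    (hSing : ∀ P : Projectivization k (Fin 3 → k),
      P ∈ Sing ↔ (eval P.rep F = 0 ∧
        eval P.rep (pderiv 0 F) = 0 ∧
        eval P.rep (pderiv 1 F) = 0 ∧
        eval P.rep (pderiv 2 F) = 0)) :
    (Sing.ncard = 2 ∨ Sing.ncard = 3 ∨ Sing.ncard = 4)
    ∧ ∀ P ∈ Sing, ∃ i j : Fin 3, eval P.rep (pderiv i (pderiv j F)) ≠ 0 := by
  have h2 : (2 : k) ≠ 0 := Ring.two_ne_zero (by rw [ringChar.eq k p]; lia)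
  exact stmt_19_general h2 α1 α2 α3 α4 β1 β2 β3 β4 hdist φ1 φ2 f hφ1 hφ2 hf F hFhom hFf Sing
    hSing
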